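/- Suppose H is a 3-partite 3-uniform hypergraph on m vertices with partition classes V₁, V₂, V₃ (every edge has one vertex in each class) with at least dm³ edges, where 2dm > 10. Then for each i ∈ {1,2,3} there is a copy of M in H which intersects V_i in exactly two vertices and each of the other two partition classes in exactly three vertices. -/

import Mathlib

open Finset

/-- `g` describes a copy of the hypergraph `M` (vertices `{1,…,8}`, edges `{1,2,3}`,
`{3,4,5}`, `{4,5,6}`, `{6,7,8}`) inside the `3`-uniform hypergraph `H`. -/
def IsMCopy {V : Type} [DecidableEq V] (H : Finset (Finset V)) (g : Fin 8 → V) : Prop :=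
  Function.Injective g ∧
  ({g 0, g 1, g 2} : Finset V) ∈ H ∧ ({g 2, g 3, g 4} : Finset V) ∈ H ∧
  ({g 3, g 4, g 5} : Finset V) ∈ H ∧ ({g 5, g 6, g 7} : Finset V) ∈ H

/-!
Order each edge as a triple `(x, y, z)` along the three classes `X`, `Y`, `Z`, where `X` is to be
met twice. Discard the edges whose first vertex has degree at most `2 * (#Y + #Z)`; more than
`#Y * #Z` edges remain, so two of them, `(x₀, y₁, z₁)` and `(x₁, y₁, z₁)`, differ only in their
first vertex. These are the two middle edges of `M`. Since at most `2 * (#Y + #Z)` pairs of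
`Y × Z` meet two given vertices of `Y` or two given vertices of `Z`, the links of `x₀` and `x₁`
are large enough to supply the two outer edges greedily.
-/

section Counting

variable {α β : Type*}

theorem exists_mem_fst_notMem_snd_notMem {P : Finset (α × β)} {Y A : Finset α} {Z B : Finset β}
    (hP : P ⊆ Y ×ˢ Z) (hcard : #A * #Z + #Y * #B < #P) :
    ∃ p ∈ P, p.1 ∉ A ∧ p.2 ∉ B := by
  classical
  by_contra! h
  have hsub : P ⊆ A ×ˢ Z ∪ Y ×ˢ B := fun p hp => by
    have hYZ := mem_product.1 (hP hp)
    by_cases hA : p.1 ∈ A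
    · exact mem_union_left _ (mem_product.2 ⟨hA, hYZ.2⟩)
    · exact mem_union_right _ (mem_product.2 ⟨hYZ.1, h p hp hA⟩)
  refine hcard.not_ge ?_
  calc #P ≤ #(A ×ˢ Z) + #(Y ×ˢ B) := (card_le_card hsub).trans (card_union_le _ _)
    _ = #A * #Z + #Y * #B := by rw [card_product, card_product]

variable [DecidableEq α] [DecidableEq β]

/-- The link of the vertex `x`, for a set of edges given as tuples with first entry `x`. -/
def link (T : Finset (α × β)) (x : α) : Finset β :=
  {t ∈ T | t.1 = x}.image Prod.snd

@[simp]
theorem mem_link {T : Finset (α × β)} {x : α} {s : β} : s ∈ link T x ↔ (x, s) ∈ T := by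
  simp [link]

theorem card_link (T : Finset (α × β)) (x : α) : #(link T x) = #{t ∈ T | t.1 = x} := by
  refine card_image_of_injOn fun t ht u hu htu => Prod.ext ?_ htu
  rw [(mem_filter.1 ht).2, (mem_filter.1 hu).2]

theorem card_filter_card_link_le {T : Finset (α × β)} {X : Finset α} (hX : ∀ t ∈ T, t.1 ∈ X)
    (k : ℕ) : #{t ∈ T | #(link T t.1) ≤ k} ≤ k * #X := by
  refine card_le_mul_card_image_of_maps_to (f := Prod.fst)
    (fun t ht => hX t (mem_filter.1 ht).1) k fun x _ => ?_
  by_cases hx : #(link T x) ≤ k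
  · rw [card_link] at hx
    exact (card_le_card (filter_subset_filter _ (filter_subset _ _))).trans hx
  · rw [filter_eq_empty_iff.2]
    · exact Nat.zero_le k
    · rintro t ht rfl
      exact hx (mem_filter.1 ht).2

theorem exists_ne_mem_mem_lt_card_link {T : Finset (α × β)} {X : Finset α} {S : Finset β} {k : ℕ}
    (hT : T ⊆ X ×ˢ S) (hcard : #S + k * #X < #T) :
    ∃ x y s, x ≠ y ∧ (x, s) ∈ T ∧ (y, s) ∈ T ∧ k < #(link T x) ∧ k < #(link T y) := by
  have hlight := card_filter_card_link_le (fun t ht => (mem_product.1 (hT ht)).1) k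
  have hsplit := card_filter_add_card_filter_not (s := T) fun t => #(link T t.1) ≤ k
  simp only [not_le] at hsplit
  have hheavy : #S < #{t ∈ T | k < #(link T t.1)} := by omega
  obtain ⟨⟨x, s⟩, hx, ⟨y, s'⟩, hy, hne, rfl : s = s'⟩ :=
    exists_ne_map_eq_of_card_lt_of_maps_to hheavy (f := Prod.snd)
      fun t ht => (mem_product.1 (hT (mem_filter.1 ht).1)).2
  rw [mem_filter] at hx hy
  exact ⟨x, y, s, fun h => hne (congrArg (·, s) h), hx.1, hy.1, hx.2, hy.2⟩

end Counting

/-- A copy of `M` in the tripartite hypergraph with set of ordered edges `T`, having two vertices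
in the first class and three in each of the others. The middle edges of `M` are
`(x 0, y 1, z 1)` and `(x 1, y 1, z 1)`. -/
structure IsOrderedMCopy {α β γ : Type*} (T : Finset (α × β × γ))
    (x : Fin 2 → α) (y : Fin 3 → β) (z : Fin 3 → γ) : Prop where
  injective_x : Function.Injective x
  injective_y : Function.Injective y
  injective_z : Function.Injective z
  mem₀₀₀ : (x 0, y 0, z 0) ∈ T
  mem₀₁₁ : (x 0, y 1, z 1) ∈ T
  mem₁₁₁ : (x 1, y 1, z 1) ∈ T
  mem₁₂₂ : (x 1, y 2, z 2) ∈ T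

theorem injective_triple_iff_ne {α : Type*} {a b c : α} :
    Function.Injective ![a, b, c] ↔ a ≠ b ∧ a ≠ c ∧ b ≠ c := by
  rw [← List.nodup_ofFn]
  simp [and_assoc]

theorem exists_isOrderedMCopy {α β γ : Type*} {T : Finset (α × β × γ)} {X : Finset α}
    {Y : Finset β} {Z : Finset γ} (hT : T ⊆ X ×ˢ Y ×ˢ Z)
    (hcard : #Y * #Z + 2 * (#Y + #Z) * #X < #T) :
    ∃ x y z, IsOrderedMCopy T x y z := by
  classical
  have hlink : ∀ x, link T x ⊆ Y ×ˢ Z := fun x p hp =>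
    (mem_product.1 (hT (mem_link.1 hp))).2
  have havoid : ∀ x (A : Finset β) (B : Finset γ), 2 * (#Y + #Z) < #(link T x) →
      #A ≤ 2 → #B ≤ 2 → ∃ p ∈ link T x, p.1 ∉ A ∧ p.2 ∉ B := fun x A B hx hA hB =>
    exists_mem_fst_notMem_snd_notMem (hlink x) <| calc
      #A * #Z + #Y * #B ≤ 2 * #Z + #Y * 2 := by gcongr
      _ = 2 * (#Y + #Z) := by ring
      _ < #(link T x) := hx
  rw [← card_product] at hcard
  obtain ⟨x₀, x₁, ⟨y₁, z₁⟩, hx, h₀₁, h₁₁, hx₀, hx₁⟩ := exists_ne_mem_mem_lt_card_link hT hcard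
  obtain ⟨⟨y₀, z₀⟩, h₀₀, hy₀, hz₀⟩ := havoid x₀ {y₁} {z₁} hx₀ (by simp) (by simp)
  obtain ⟨⟨y₂, z₂⟩, h₁₂, hy₂, hz₂⟩ := havoid x₁ {y₀, y₁} {z₀, z₁} hx₁ card_le_two card_le_two
  simp only [mem_insert, mem_singleton, not_or, ← ne_eq] at hy₀ hz₀ hy₂ hz₂
  exact ⟨![x₀, x₁], ![y₀, y₁, y₂], ![z₀, z₁, z₂],
    { injective_x := injective_pair_iff_ne.2 hx
      injective_y := injective_triple_iff_ne.2 ⟨hy₀, hy₂.1.symm, hy₂.2.symm⟩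
      injective_z := injective_triple_iff_ne.2 ⟨hz₀, hz₂.1.symm, hz₂.2.symm⟩
      mem₀₀₀ := mem_link.1 h₀₀
      mem₀₁₁ := h₀₁
      mem₁₁₁ := h₁₁
      mem₁₂₂ := mem_link.1 h₁₂ }⟩

section OrderedEdges

variable {V : Type*} [DecidableEq V] {H : Finset (Finset V)} {X Y Z : Finset V}

/-- The edges of `H` with one vertex in each of `X`, `Y`, `Z`, as triples in that order. -/
def orderedEdges (H : Finset (Finset V)) (X Y Z : Finset V) : Finset (V × V × V) :=
  {t ∈ X ×ˢ Y ×ˢ Z | {t.1, t.2.1, t.2.2} ∈ H}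

theorem mem_orderedEdges {x y z : V} :
    (x, y, z) ∈ orderedEdges H X Y Z ↔ (x ∈ X ∧ y ∈ Y ∧ z ∈ Z) ∧ {x, y, z} ∈ H := by
  simp only [orderedEdges, mem_filter, mem_product]

theorem exists_eq_triple_of_card_inter_eq_one {e : Finset V}
    (hXY : Disjoint X Y) (hXZ : Disjoint X Z) (hYZ : Disjoint Y Z) (he : #e = 3)
    (hX : #(e ∩ X) = 1) (hY : #(e ∩ Y) = 1) (hZ : #(e ∩ Z) = 1) :
    ∃ x ∈ X, ∃ y ∈ Y, ∃ z ∈ Z, {x, y, z} = e := by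
  have hunion : e ∩ X ∪ (e ∩ Y ∪ e ∩ Z) = e := by
    refine eq_of_subset_of_card_le (by grind) ?_
    rw [card_union_of_disjoint, card_union_of_disjoint, hX, hY, hZ, he]
    · exact hYZ.mono inter_subset_right inter_subset_right
    · exact disjoint_union_right.2 ⟨hXY.mono inter_subset_right inter_subset_right,
        hXZ.mono inter_subset_right inter_subset_right⟩
  obtain ⟨x, hx⟩ := card_eq_one.1 hX
  obtain ⟨y, hy⟩ := card_eq_one.1 hY
  obtain ⟨z, hz⟩ := card_eq_one.1 hZ
  refine ⟨x, ?_, y, ?_, z, ?_, ?_⟩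
  · exact inter_subset_right (hx ▸ mem_singleton_self x)
  · exact inter_subset_right (hy ▸ mem_singleton_self y)
  · exact inter_subset_right (hz ▸ mem_singleton_self z)
  · rwa [hx, hy, hz] at hunion

theorem card_le_card_orderedEdges
    (hXY : Disjoint X Y) (hXZ : Disjoint X Z) (hYZ : Disjoint Y Z) (hH : ∀ e ∈ H, #e = 3)
    (hX : ∀ e ∈ H, #(e ∩ X) = 1) (hY : ∀ e ∈ H, #(e ∩ Y) = 1) (hZ : ∀ e ∈ H, #(e ∩ Z) = 1) :
    #H ≤ #(orderedEdges H X Y Z) := by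
  refine card_le_card_of_surjOn (fun t => {t.1, t.2.1, t.2.2}) fun e he => ?_
  obtain ⟨x, hx, y, hy, z, hz, rfl⟩ := exists_eq_triple_of_card_inter_eq_one hXY hXZ hYZ
    (hH e he) (hX e he) (hY e he) (hZ e he)
  exact ⟨(x, y, z), mem_orderedEdges.2 ⟨⟨hx, hy, hz⟩, he⟩, rfl⟩

end OrderedEdges

/-- The vertices of an ordered copy of `M`, indexed as in `IsMCopy`. -/
def mVertices {V : Type*} (x : Fin 2 → V) (y z : Fin 3 → V) : Fin 8 → V :=
  ![y 0, z 0, x 0, y 1, z 1, x 1, y 2, z 2]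

theorem image_mVertices {V : Type*} [DecidableEq V] (x : Fin 2 → V) (y z : Fin 3 → V) :
    univ.image (mVertices x y z) = univ.image x ∪ (univ.image y ∪ univ.image z) := by
  ext v
  simp only [mVertices, mem_union, mem_image, mem_univ, true_and, Fin.exists_fin_succ,
    IsEmpty.exists_iff, or_false]
  tauto

namespace IsOrderedMCopy

section Classes

variable {V : Type*} [DecidableEq V] {H : Finset (Finset V)} {X Y Z : Finset V}
  {x : Fin 2 → V} {y z : Fin 3 → V}

theorem image_x_subset (h : IsOrderedMCopy (orderedEdges H X Y Z) x y z) :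
    univ.image x ⊆ X := by
  simp [image_subset_iff, Fin.forall_fin_succ, (mem_orderedEdges.1 h.mem₀₀₀).1,
    (mem_orderedEdges.1 h.mem₁₁₁).1]

theorem image_y_subset (h : IsOrderedMCopy (orderedEdges H X Y Z) x y z) :
    univ.image y ⊆ Y := by
  simp [image_subset_iff, Fin.forall_fin_succ, (mem_orderedEdges.1 h.mem₀₀₀).1,
    (mem_orderedEdges.1 h.mem₁₁₁).1, (mem_orderedEdges.1 h.mem₁₂₂).1]

theorem image_z_subset (h : IsOrderedMCopy (orderedEdges H X Y Z) x y z) :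
    univ.image z ⊆ Z := by
  simp [image_subset_iff, Fin.forall_fin_succ, (mem_orderedEdges.1 h.mem₀₀₀).1,
    (mem_orderedEdges.1 h.mem₁₁₁).1, (mem_orderedEdges.1 h.mem₁₂₂).1]

theorem injective_mVertices (hXY : Disjoint X Y) (hXZ : Disjoint X Z) (hYZ : Disjoint Y Z)
    (h : IsOrderedMCopy (orderedEdges H X Y Z) x y z) :
    Function.Injective (mVertices x y z) := by
  have hyz := hYZ.mono h.image_y_subset h.image_z_subset
  have hxyz := disjoint_union_right.2
    ⟨hXY.mono h.image_x_subset h.image_y_subset, hXZ.mono h.image_x_subset h.image_z_subset⟩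
  rw [← Set.injOn_univ, ← coe_univ, ← card_image_iff, image_mVertices,
    card_union_of_disjoint hxyz, card_union_of_disjoint hyz,
    card_image_of_injective _ h.injective_x, card_image_of_injective _ h.injective_y,
    card_image_of_injective _ h.injective_z]
  rfl

theorem card_image_mVertices_inter (hXY : Disjoint X Y) (hXZ : Disjoint X Z) (hYZ : Disjoint Y Z)
    (h : IsOrderedMCopy (orderedEdges H X Y Z) x y z) :
    #(univ.image (mVertices x y z) ∩ X) = 2 ∧ #(univ.image (mVertices x y z) ∩ Y) = 3 ∧
      #(univ.image (mVertices x y z) ∩ Z) = 3 := by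
  have hx := h.image_x_subset
  have hy := h.image_y_subset
  have hz := h.image_z_subset
  have hxY := disjoint_iff_inter_eq_empty.1 (hXY.mono_left hx)
  have hxZ := disjoint_iff_inter_eq_empty.1 (hXZ.mono_left hx)
  have hyX := disjoint_iff_inter_eq_empty.1 (hXY.symm.mono_left hy)
  have hyZ := disjoint_iff_inter_eq_empty.1 (hYZ.mono_left hy)
  have hzX := disjoint_iff_inter_eq_empty.1 (hXZ.symm.mono_left hz)
  have hzY := disjoint_iff_inter_eq_empty.1 (hYZ.symm.mono_left hz)
  simp [image_mVertices, union_inter_distrib_right, inter_eq_left.2 hx, inter_eq_left.2 hy,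
    inter_eq_left.2 hz, hxY, hxZ, hyX, hyZ, hzX, hzY, card_image_of_injective, h.injective_x,
    h.injective_y, h.injective_z]

end Classes

theorem isMCopy_mVertices {V : Type} [DecidableEq V] {H : Finset (Finset V)} {X Y Z : Finset V}
    {x : Fin 2 → V} {y z : Fin 3 → V}
    (hXY : Disjoint X Y) (hXZ : Disjoint X Z) (hYZ : Disjoint Y Z)
    (h : IsOrderedMCopy (orderedEdges H X Y Z) x y z) : IsMCopy H (mVertices x y z) := by
  have rotate (u v w : V) : ({u, v, w} : Finset V) = {v, w, u} := by grind
  refine ⟨h.injective_mVertices hXY hXZ hYZ, ?_, (mem_orderedEdges.1 h.mem₀₁₁).2, ?_,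
    (mem_orderedEdges.1 h.mem₁₂₂).2⟩
  · exact rotate (x 0) (y 0) (z 0) ▸ (mem_orderedEdges.1 h.mem₀₀₀).2
  · exact rotate (x 1) (y 1) (z 1) ▸ (mem_orderedEdges.1 h.mem₁₁₁).2

end IsOrderedMCopy

theorem M_copy_in_tripartite_general {V : Type} [DecidableEq V] {H : Finset (Finset V)}
    {W : Fin 3 → Finset V} (hdisj : ∀ i j, i ≠ j → Disjoint (W i) (W j))
    (huniform : ∀ e ∈ H, #e = 3) (hpartite : ∀ e ∈ H, ∀ i, #(e ∩ W i) = 1) (i : Fin 3)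
    (hedges : #(W (i + 1)) * #(W (i + 2)) + 2 * (#(W (i + 1)) + #(W (i + 2))) * #(W i) < #H) :
    ∃ g : Fin 8 → V, IsMCopy H g ∧ #(univ.image g ∩ W i) = 2 ∧
      ∀ j, j ≠ i → #(univ.image g ∩ W j) = 3 := by
  have h01 : Disjoint (W i) (W (i + 1)) := hdisj _ _ (by simp)
  have h02 : Disjoint (W i) (W (i + 2)) := hdisj _ _ (by simp)
  have h12 : Disjoint (W (i + 1)) (W (i + 2)) := hdisj _ _ (by simp)
  have hcard : #H ≤ #(orderedEdges H (W i) (W (i + 1)) (W (i + 2))) :=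
    card_le_card_orderedEdges h01 h02 h12 huniform
      (fun e he => hpartite e he _) (fun e he => hpartite e he _) (fun e he => hpartite e he _)
  obtain ⟨x, y, z, h⟩ := exists_isOrderedMCopy (filter_subset _ _) (hedges.trans_le hcard)
  obtain ⟨hx, hy, hz⟩ := h.card_image_mVertices_inter h01 h02 h12
  refine ⟨mVertices x y z, h.isMCopy_mVertices h01 h02 h12, hx, fun j hj => ?_⟩
  obtain rfl | rfl : j = i + 1 ∨ j = i + 2 := by lia
  · exact hy
  · exact hz

theorem five_mul_sq_lt_of_ten_lt {m n : ℕ} {d : ℝ} (hn : d * (m : ℝ) ^ 3 ≤ n)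
    (hdm : 10 < 2 * d * m) : 5 * m ^ 2 < n := by
  have hm : (0 : ℝ) < m := Nat.cast_pos.2 <| Nat.pos_of_ne_zero <| by
    rintro rfl
    norm_num at hdm
  have : (5 * m ^ 2 : ℝ) < n := calc
    (5 * m ^ 2 : ℝ) < d * m * m ^ 2 := by gcongr; linarith
    _ = d * m ^ 3 := by ring
    _ ≤ n := hn
  exact_mod_cast this

theorem mul_add_two_mul_add_mul_le {a b c m : ℕ} (ha : a ≤ m) (hb : b ≤ m) (hc : c ≤ m) :
    b * c + 2 * (b + c) * a ≤ 5 * m ^ 2 := calc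
  b * c + 2 * (b + c) * a ≤ m * m + 2 * (m + m) * m := by gcongr
  _ = 5 * m ^ 2 := by ring

theorem M_copy_in_tripartite (V : Type) [Fintype V] [DecidableEq V]
    (H : Finset (Finset V)) (m : ℕ) (d : ℝ)
    (hcard : Fintype.card V = m) (huniform : ∀ e ∈ H, e.card = 3)
    (W : Fin 3 → Finset V)
    (hdisj : ∀ i j, i ≠ j → Disjoint (W i) (W j))
    (hcover : W 0 ∪ W 1 ∪ W 2 = Finset.univ)
    (hpartite : ∀ e ∈ H, ∀ i, (e ∩ W i).card = 1)
    (hedges : d * (m : ℝ) ^ 3 ≤ (H.card : ℝ))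
    (hdm : 10 < 2 * d * m) :
    ∀ i : Fin 3, ∃ g : Fin 8 → V, IsMCopy H g ∧
      ((Finset.univ.image g) ∩ W i).card = 2 ∧
      ∀ j, j ≠ i → ((Finset.univ.image g) ∩ W j).card = 3 := by
  have hW (j : Fin 3) : #(W j) ≤ m := hcard ▸ card_le_univ (W j)
  exact fun i => M_copy_in_tripartite_general hdisj huniform hpartite i <|
    (mul_add_two_mul_add_mul_le (hW _) (hW _) (hW _)).trans_lt (five_mul_sq_lt_of_ten_lt hedges hdm)
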